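/- Let X be a set, C = {c_1,…,c_d} a class of d concepts X → {0,1}, α ∈ (0,1), ε > 0, and v ∈ ℕ such that no subset of X of size v+1 is shattered by C. Let n ≥ (64/α)·(v·ln(128/α) + ln 8). If there exists a non-interactive ε-differentially private protocol in the local model with n agents that solves the selection problem over {0,1}^d with accuracy α, then there exists a non-interactive ε-differentially private protocol in the local model with n agents, each holding one labeled example from X × {0,1}, that is a proper (4α, 1/4)-PAC learner for C (its output is always some c_j ∈ C). -/

import Mathlib

open scoped ENNReal

/-- Two databases of size `m` are neighboring if they differ in at most one entry. -/
def Neighbor {X : Type*} {m : ℕ} (x x' : Fin m → X) : Prop :=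
  ∃ i : Fin m, ∀ j : Fin m, j ≠ i → x j = x' j

/-- The probability that a sample from `P` lands in the set `T`. -/
noncomputable def prOf {Y : Type*} (P : PMF Y) (T : Set Y) : ℝ≥0∞ :=
  P.toOuterMeasure T

/-- `ε`-differential privacy for a mechanism operating on databases of size `m`. -/
def DPAlg {X Y : Type*} {m : ℕ} (ε : ℝ) (A : (Fin m → X) → PMF Y) : Prop :=
  ∀ x x' : Fin m → X, Neighbor x x' → ∀ T : Set Y,
    prOf (A x) T ≤ ENNReal.ofReal (Real.exp ε) * prOf (A x') T

/-- `ε`-differential privacy for a local randomizer. -/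
def DPRand {X Y : Type*} (ε : ℝ) (R : X → PMF Y) : Prop :=
  ∀ x x' : X, ∀ T : Set Y,
    prOf (R x) T ≤ ENNReal.ofReal (Real.exp ε) * prOf (R x') T

/-- `m` i.i.d. samples from the distribution `D`. -/
noncomputable def iid {Z : Type*} (D : PMF Z) : (m : ℕ) → PMF (Fin m → Z)
  | 0 => PMF.pure (fun i => i.elim0)
  | m + 1 => (iid D m).bind fun f => D.bind fun z => PMF.pure (Fin.cons z f)

/-- Independent product of finitely many PMFs. -/
noncomputable def pmfPi : (n : ℕ) → {T : Fin n → Type} → (∀ i, PMF (T i)) → PMF (∀ i, T i)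
  | 0, _, _ => PMF.pure (fun i => i.elim0)
  | n + 1, T, P =>
      (P 0).bind fun t0 =>
        (@pmfPi n (fun i => T i.succ) (fun i => P i.succ)).bind fun ts =>
          PMF.pure (Fin.cons t0 ts)

/-- XOR of a finite family of bits. -/
def xorFold {I : Type*} [Fintype I] (f : I → Bool) : Bool :=
  decide ((Finset.univ.filter (fun i => f i = true)).card % 2 = 1)

/-- The parity function `Par_k(x) = ⊕ k_i x_i`. -/
def Par {c : ℕ} (k x : Fin c → Bool) : Bool := xorFold (fun i => k i && x i)

/-- Interpret a bit string as an integer in `{0, …, 2^b − 1}`. -/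
def bitsToNat {b : ℕ} (y : Fin b → Bool) : ℕ :=
  ∑ i : Fin b, if y i then 2 ^ (i : ℕ) else 0

/-- The threshold function `Thr_t(y) = 1` iff `y ≥ t`. -/
def Thr {b : ℕ} (t y : Fin b → Bool) : Bool := decide (bitsToNat t ≤ bitsToNat y)

/-- Generalization error of hypothesis `h` w.r.t. target `c` under distribution `D`. -/
noncomputable def errD {Z L : Type*} (D : PMF Z) (c h : Z → L) : ℝ≥0∞ :=
  prOf D {z | h z ≠ c z}

/-- `(α, β)`-PAC learning for the concept class `C` with sample complexity `m`:
for every concept in `C` and distribution `D` on the domain, when the `m` examples are drawn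
i.i.d. from `D` and labeled by the concept, with probability at least `1 − β` the output
hypothesis has generalization error at most `α`. -/
def PACLearner {Z L : Type*} {m : ℕ} (α β : ℝ) (C : Set (Z → L))
    (A : (Fin m → Z × L) → PMF (Z → L)) : Prop :=
  ∀ c ∈ C, ∀ D : PMF Z,
    ENNReal.ofReal (1 - β) ≤
      prOf ((iid D m).bind fun s => A (fun i => (s i, c (s i))))
        {h | errD D c h ≤ ENNReal.ofReal α}

/-- Mapping i.i.d. samples pointwise gives i.i.d. samples from the mapped distribution. -/
theorem iid_map {Y Z : Type*} (D : PMF Z) (f : Z → Y) (m : ℕ) :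
    iid (D.map f) m = (iid D m).map fun s i => f (s i) := by
  induction m with
  | zero =>
    simp only [iid, PMF.pure_map]
    congr 1
    funext i
    exact i.elim0
  | succ m ih =>
    simp only [iid, ih, PMF.map_bind, PMF.bind_map, PMF.pure_map]
    congr 1
    funext s
    simp only [Function.comp_apply]
    congr 1
    funext z
    simp only [Function.comp_apply]
    congr 1
    funext i
    refine Fin.cases ?_ (fun j => ?_) i <;> simp

theorem prOf_ne_top {Y : Type*} (P : PMF Y) (T : Set Y) : prOf P T ≠ ⊤ :=
  ne_top_of_le_ne_top P.tsum_coe_ne_top <| by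
    rw [prOf, PMF.toOuterMeasure_apply]
    exact ENNReal.tsum_le_tsum fun y => Set.indicator_le_self T P y

theorem toReal_prOf_add_compl {Y : Type*} (P : PMF Y) (T : Set Y) :
    (prOf P T).toReal + (prOf P Tᶜ).toReal = 1 := by
  rw [← ENNReal.toReal_add (prOf_ne_top P T) (prOf_ne_top P Tᶜ)]
  have h : prOf P T + prOf P Tᶜ = 1 := by
    simp only [prOf, PMF.toOuterMeasure_apply]
    rw [← ENNReal.tsum_add, ← P.tsum_coe]
    congr 1
    funext y
    exact congrFun (Set.indicator_self_add_compl T P) y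
  rw [h, ENNReal.toReal_one]

/-- Markov's inequality: a nonnegative cost of mean at most `α` is at most `4 * α` with
probability at least `3 / 4`. -/
theorem three_quarters_le_prOf_of_sum_le {ι : Type*} [Fintype ι] (P : PMF ι) (e : ι → ℝ)
    (he : ∀ j, 0 ≤ e j) {α : ℝ} (hα : 0 < α) (h : ∑ j, (P j).toReal * e j ≤ α) :
    ENNReal.ofReal (3 / 4 : ℝ) ≤ prOf P {j | e j ≤ 4 * α} := by
  classical
  rw [ENNReal.ofReal_le_iff_le_toReal (prOf_ne_top P _)]
  have hcompl := toReal_prOf_add_compl P {j | e j ≤ 4 * α}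
  have hbad : (prOf P {j | e j ≤ 4 * α}ᶜ).toReal * (4 * α) ≤ α := by
    refine le_trans ?_ h
    rw [prOf, PMF.toOuterMeasure_apply_fintype, ENNReal.toReal_sum, Finset.sum_mul]
    · refine Finset.sum_le_sum fun j _ => ?_
      by_cases hj : e j ≤ 4 * α
      · simpa [Set.indicator, hj] using mul_nonneg ENNReal.toReal_nonneg (he j)
      · simpa [Set.indicator, hj] using
          mul_le_mul_of_nonneg_left (not_le.mp hj).le ENNReal.toReal_nonneg
    · intro j _
      by_cases hj : e j ≤ 4 * α <;> simp [Set.indicator, hj, P.apply_ne_top]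
  nlinarith

/-- from a non-interactive `ε`-DP local-model protocol with `n` agents solving the
selection problem over `{0,1}^d` with accuracy `α`, provided no subset of `X` of size `v+1` is
shattered by the class `C = {c_1,…,c_d}` and `n ≥ (64/α)·(v·ln(128/α) + ln 8)`, one obtains a
non-interactive `ε`-DP local-model protocol with `n` agents (each holding one labeled example)
that properly `(4α, 1/4)`-PAC learns `C` — its output is an index `j`, interpreted as the
hypothesis `c_j ∈ C`. -/
theorem stmt_11 (X : Type) (d : ℕ) (c : Fin d → X → Bool) (α ε : ℝ) (v n : ℕ)
    (hα0 : 0 < α) (hα1 : α < 1) (hε : 0 < ε)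
    (hVC : ∀ S : Finset X, S.card = v + 1 →
      ¬ ∀ g : X → Bool, ∃ j : Fin d, ∀ x ∈ S, c j x = g x)
    (hn : (64 / α) * ((v : ℝ) * Real.log (128 / α) + Real.log 8) ≤ (n : ℝ))
    (Mi : Fin n → Type)
    (R : ∀ i : Fin n, (Fin d → Bool) → PMF (Mi i))
    (sel : (∀ i, Mi i) → PMF (Fin d))
    (hR : ∀ i, DPRand ε (R i))
    (hSel : ∀ D : PMF (Fin d → Bool),
      (⨆ k : Fin d, (prOf D {y | y k = true}).toReal) - α ≤
        ∑ j : Fin d,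
          (((iid D n).bind fun ys => (pmfPi n fun i => R i (ys i)).bind sel) j).toReal *
            (prOf D {y | y j = true}).toReal) :
    ∃ (Mi' : Fin n → Type) (R' : ∀ i : Fin n, X × Bool → PMF (Mi' i))
      (sel' : (∀ i, Mi' i) → PMF (Fin d)),
      (∀ i, DPRand ε (R' i)) ∧
      ∀ (j0 : Fin d) (D : PMF X),
        ENNReal.ofReal (3 / 4 : ℝ) ≤
          prOf ((iid D n).bind fun ys =>
                 (pmfPi n fun i => R' i (ys i, c j0 (ys i))).bind sel')
            {j | errD D (c j0) (c j) ≤ ENNReal.ofReal (4 * α)} := by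
  classical
  let φ : X × Bool → Fin d → Bool := fun z k => c k z.1 == z.2
  refine ⟨Mi, fun i z => R i (φ z), sel, fun i z z' => hR i (φ z) (φ z'), fun j0 D => ?_⟩
  let ψ : X → Fin d → Bool := fun x => φ (x, c j0 x)
  have hS := hSel (D.map ψ)
  rw [iid_map, PMF.bind_map] at hS
  set P : PMF (Fin d) := (iid D n).bind fun ys =>
    (pmfPi n fun i => R i (φ (ys i, c j0 (ys i)))).bind sel
  change _ ≤ ∑ j, (P j).toReal * _ at hS
  have hmean (k : Fin d) : (prOf (D.map ψ) {y | y k = true}).toReal =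
      1 - (errD D (c j0) (c k)).toReal := by
    have hset : ψ ⁻¹' {y | y k = true} = {x | c k x ≠ c j0 x}ᶜ := by
      ext x
      simp [ψ, φ]
    have hadd := toReal_prOf_add_compl D {x | c k x ≠ c j0 x}
    rw [prOf, PMF.toOuterMeasure_map_apply, hset, errD]
    change (prOf D _).toReal = _
    linarith
  simp only [hmean] at hS
  have hsup : (1 : ℝ) ≤ ⨆ k, (1 - (errD D (c j0) (c k)).toReal) := by
    refine le_trans ?_ (le_ciSup (Set.finite_range _).bddAbove j0)
    simp [errD, prOf]
  have hsum : ∑ j, (P j).toReal = 1 := by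
    rw [← ENNReal.toReal_sum fun j _ => P.apply_ne_top j,
      ← tsum_fintype (L := .unconditional _) (fun j => P j), P.tsum_coe, ENNReal.toReal_one]
  have herr : ∑ j, (P j).toReal * (errD D (c j0) (c j)).toReal ≤ α := by
    simp only [mul_sub, mul_one, Finset.sum_sub_distrib, hsum] at hS
    linarith
  convert three_quarters_le_prOf_of_sum_le P _ (fun j => ENNReal.toReal_nonneg) hα0 herr using 3
  funext j
  exact propext (ENNReal.le_ofReal_iff_toReal_le (prOf_ne_top D _) (by linarith))
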